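/- Let F_q be a finite field with q elements, let m ≥ 1, let X ⊆ F_q^m be a finite set of vectors which spans F_q^m, and let M = (X, I) be the matroid on X whose independent sets are the linearly independent subsets of X (so rk(M) = m). Then for all integers 1 ≤ k < m: I(k)² ≥ (1 + 1/k)·(1 + 1/(q^{m−k+1} − 2))·I(k−1)·I(k+1). -/

import Mathlib

open scoped Classical BigOperators

noncomputable section

/-- The number of `k`-element subsets of `X ⊆ F^m` which are linearly independent over `F`;
these are the independent sets of size `k` of the matroid on `X` of vectors in `F^m`. -/
def numLinIndepSets (F : Type*) [Field F] {m : ℕ} (X : Finset (Fin m → F)) (k : ℕ) : ℕ :=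
  (X.powerset.filter (fun S => S.card = k ∧
    LinearIndependent F (fun v : {x // x ∈ S} => (v : Fin m → F)))).card

/-!
The generating polynomial of the independent sets, homogenised by one extra variable and with an
independent set `T` weighted by `a (card T)`, is Lorentzian: at every point of the positive orthant
its Hessian, and that of each of its derivatives, has at most one positive eigenvalue. For the
quadratic derivatives, one for each independent set `S`, this is Cauchy–Schwarz over the flats
covering the span of `S` (two elements extend `S` jointly iff they lie in different covers), and it
holds when these covers are few compared with `a`. It passes to a cubic derivative and upwards by
the Bochner method: Euler's identity writes a Hessian as a positive combination of the Hessians of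
the partial derivatives, and summing their reverse Cauchy–Schwarz inequalities excludes eigenvalues
strictly between `0` and `1` for the normalised Hessian.

The reverse Cauchy–Schwarz inequality between the homogenising variable and the all-ones direction
is log-concavity of `a j * j! * I(j)`. Over a field with `q` elements, an independent set of size
`k - 1` in dimension `m` has at most `q ^ (m - k + 1) - 1` covers, since each comes from a nonzero
vector of a quotient of dimension `m - k + 1`. Letting `a` drop by the right factor between `k - 1`
and `k` turns this bound into the extra factor.
-/

open scoped Matrix

section Hyperbolic

variable {ι : Type*} [Fintype ι] {A : Matrix ι ι ℝ} {w : ι → ℝ}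

/-- The reverse Cauchy–Schwarz inequality against the vector `w` for the quadratic form of `A`.
For symmetric `A` with `wᵀAw > 0` it says that `A` has exactly one positive eigenvalue. -/
def IsHyperbolicAt (A : Matrix ι ι ℝ) (w : ι → ℝ) : Prop :=
  ∀ v, (v ⬝ᵥ A *ᵥ v) * (w ⬝ᵥ A *ᵥ w) ≤ (w ⬝ᵥ A *ᵥ v) ^ 2

lemma dotProduct_mulVec_comm_of_isSymm (hA : A.IsSymm) (u v : ι → ℝ) :
    u ⬝ᵥ A *ᵥ v = v ⬝ᵥ A *ᵥ u := by
  rw [Matrix.dotProduct_mulVec, ← Matrix.mulVec_transpose, hA.eq, dotProduct_comm]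

lemma isHyperbolicAt_of_nonpos_of_dotProduct_eq_zero (hA : A.IsSymm) (hw : 0 ≤ w ⬝ᵥ A *ᵥ w)
    (p : ι → ℝ) (hp : ∀ u, p ⬝ᵥ u = 0 → u ⬝ᵥ A *ᵥ u ≤ 0) : IsHyperbolicAt A w := by
  intro v
  rcases hw.eq_or_lt with hw0 | hw0
  · rw [← hw0, mul_zero]
    positivity
  have hpw : p ⬝ᵥ w ≠ 0 := fun h ↦ (hp w h).not_gt hw0
  set s := p ⬝ᵥ v / p ⬝ᵥ w with hs
  have hshift := hp (v - s • w) <| by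
    rw [dotProduct_sub, dotProduct_smul, smul_eq_mul, hs, div_mul_cancel₀ _ hpw, sub_self]
  have hexpand : (v - s • w) ⬝ᵥ A *ᵥ (v - s • w) =
      v ⬝ᵥ A *ᵥ v - 2 * s * (w ⬝ᵥ A *ᵥ v) + s ^ 2 * (w ⬝ᵥ A *ᵥ w) := by
    simp only [Matrix.mulVec_sub, Matrix.mulVec_smul, dotProduct_sub, sub_dotProduct,
      dotProduct_smul, smul_dotProduct, smul_eq_mul]
    rw [dotProduct_mulVec_comm_of_isSymm hA v w]
    ring
  nlinarith [sq_nonneg (s * (w ⬝ᵥ A *ᵥ w) - w ⬝ᵥ A *ᵥ v)]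

lemma IsHyperbolicAt.of_pos (hA : A.IsSymm) {e : ι → ℝ} (he : IsHyperbolicAt A e)
    (hpos : 0 < e ⬝ᵥ A *ᵥ e) (hw : 0 ≤ w ⬝ᵥ A *ᵥ w) : IsHyperbolicAt A w := by
  refine isHyperbolicAt_of_nonpos_of_dotProduct_eq_zero hA hw (A *ᵥ e) fun u hu ↦ ?_
  have hle := he u
  rw [dotProduct_mulVec_comm_of_isSymm hA e u, dotProduct_comm u (A *ᵥ e), hu,
    zero_pow two_ne_zero] at hle
  exact nonpos_of_mul_nonpos_left hle hpos

lemma dotProduct_mulVec_eq_sum_eigenvalues (hA : A.IsHermitian) (v : ι → ℝ) :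
    v ⬝ᵥ A *ᵥ v = ∑ i, hA.eigenvalues i * ((hA.eigenvectorBasis i).ofLp ⬝ᵥ v) ^ 2 := by
  have hsymm : A.IsSymm := by simpa using hA
  have hParseval := hA.eigenvectorBasis.sum_inner_mul_inner (WithLp.toLp 2 v)
    (WithLp.toLp 2 (A *ᵥ v))
  simp only [EuclideanSpace.inner_eq_star_dotProduct, star_trivial] at hParseval
  rw [dotProduct_comm, ← hParseval]
  refine Finset.sum_congr rfl fun i _ ↦ ?_
  rw [dotProduct_comm (A *ᵥ v), dotProduct_mulVec_comm_of_isSymm hsymm,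
    hA.mulVec_eigenvectorBasis i, dotProduct_smul, smul_eq_mul, dotProduct_comm v]
  ring

lemma dotProduct_mulVec_nonpos_of_eigenvectors (hA : A.IsHermitian) {p : ι → ℝ}
    (hp : ∀ l > (0 : ℝ), ∀ u, A *ᵥ u = l • u → ∃ c : ℝ, u = c • p) {v : ι → ℝ}
    (hv : p ⬝ᵥ v = 0) : v ⬝ᵥ A *ᵥ v ≤ 0 := by
  rw [dotProduct_mulVec_eq_sum_eigenvalues hA]
  refine Finset.sum_nonpos fun i _ ↦ ?_
  rcases le_or_gt (hA.eigenvalues i) 0 with hl | hl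
  · exact mul_nonpos_of_nonpos_of_nonneg hl (sq_nonneg _)
  · obtain ⟨c, hc⟩ := hp _ hl _ (hA.mulVec_eigenvectorBasis i)
    simp [hc, hv]

lemma dotProduct_mulVec_eq_rescale (hA : A.IsSymm) {g : ι → ℝ}
    (hg : ∀ x y, g x = 0 → A x y = 0) (v : ι → ℝ) :
    v ⬝ᵥ A *ᵥ v =
      (g * v) ⬝ᵥ (Matrix.diagonal g⁻¹ * A * Matrix.diagonal g⁻¹) *ᵥ (g * v) := by
  simp only [Matrix.dot_mulVec_eq_sum_sum, Matrix.mul_diagonal, Matrix.diagonal_mul,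
    Pi.mul_apply, Pi.inv_apply]
  refine Finset.sum_congr rfl fun y _ ↦ Finset.sum_congr rfl fun x _ ↦ ?_
  rcases eq_or_ne (g x) 0 with hx | hx
  · simp [hg x y hx]
  rcases eq_or_ne (g y) 0 with hy | hy
  · simp [← hA.apply x y, hg y x hy]
  field_simp

-- Rescaling by `g` turns `A z = l g² z` into an ordinary symmetric eigenvalue problem; where `g`
-- vanishes, the junk value `0⁻¹ = 0` is the right one.
lemma dotProduct_mulVec_nonpos_of_generalized_eigenvectors (hA : A.IsSymm) {g : ι → ℝ}
    (hg : ∀ x y, g x = 0 → A x y = 0) {p : ι → ℝ}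
    (hp : ∀ l > (0 : ℝ), ∀ z, A *ᵥ z = l • (g ^ 2 * z) → ∃ c, ∀ x, g x ≠ 0 → z x = c * p x)
    {v : ι → ℝ} (hv : (g ^ 2 * p) ⬝ᵥ v = 0) : v ⬝ᵥ A *ᵥ v ≤ 0 := by
  set B := Matrix.diagonal g⁻¹ * A * Matrix.diagonal g⁻¹ with hB
  have hBherm : B.IsHermitian := Matrix.IsHermitian.ext fun x y ↦ by
    simp only [hB, Matrix.mul_diagonal, Matrix.diagonal_mul, star_trivial, hA.apply x y]
    ring
  have hBmul (u x) : (B *ᵥ u) x = (g x)⁻¹ * (A *ᵥ (g⁻¹ * u)) x := by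
    have hdiag : Matrix.diagonal g⁻¹ *ᵥ u = g⁻¹ * u :=
      funext fun x ↦ Matrix.mulVec_diagonal _ _ _
    rw [hB, ← Matrix.mulVec_mulVec, ← Matrix.mulVec_mulVec, Matrix.mulVec_diagonal, hdiag,
      Pi.inv_apply]
  rw [dotProduct_mulVec_eq_rescale hA hg]
  refine dotProduct_mulVec_nonpos_of_eigenvectors hBherm (p := g * p) (fun l hl u hu ↦ ?_) ?_
  · have heigen (x) : (g x)⁻¹ * (A *ᵥ (g⁻¹ * u)) x = l * u x := by rw [← hBmul, hu]; rfl
    have hpencil : A *ᵥ (g⁻¹ * u) = l • (g ^ 2 * (g⁻¹ * u)) := funext fun x ↦ by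
      rcases eq_or_ne (g x) 0 with hx | hx
      · simp [Matrix.mulVec, dotProduct, hg x _ hx, hx]
      · have heigenx := (inv_mul_eq_iff_eq_mul₀ hx).1 (heigen x)
        simp only [heigenx, Pi.smul_apply, Pi.mul_apply, Pi.pow_apply, Pi.inv_apply, smul_eq_mul]
        field_simp
    obtain ⟨c, hc⟩ := hp l hl _ hpencil
    refine ⟨c, funext fun x ↦ ?_⟩
    rcases eq_or_ne (g x) 0 with hx | hx
    · have hux : u x = 0 := by simpa [hx, hl.ne'] using heigen x
      simp [hx, hux]
    · have hux : (g x)⁻¹ * u x = c * p x := hc x hx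
      rw [inv_mul_eq_iff_eq_mul₀ hx] at hux
      simp only [hux, Pi.smul_apply, Pi.mul_apply, smul_eq_mul, mul_left_comm]
  · rw [← hv]
    refine Finset.sum_congr rfl fun x _ ↦ ?_
    simp only [Pi.mul_apply, Pi.pow_apply]
    ring

lemma sum_sum_mul_sub_sq (hA : A.IsSymm) (w y : ι → ℝ) :
    ∑ i, ∑ j, A i j * w i * w j * (y i - y j) ^ 2 =
      2 * (∑ i, w i * (A *ᵥ w) i * y i ^ 2 - (w * y) ⬝ᵥ A *ᵥ (w * y)) := by
  have hdiag : ∑ i, ∑ j, A i j * w i * w j * y i ^ 2 = ∑ i, w i * (A *ᵥ w) i * y i ^ 2 := by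
    simp only [Matrix.mulVec, dotProduct, Finset.mul_sum, Finset.sum_mul]
    exact Finset.sum_congr rfl fun i _ ↦ Finset.sum_congr rfl fun j _ ↦ by ring
  have hdiag' : ∑ i, ∑ j, A i j * w i * w j * y j ^ 2 = ∑ i, w i * (A *ᵥ w) i * y i ^ 2 := by
    rw [← hdiag, Finset.sum_comm]
    refine Finset.sum_congr rfl fun i _ ↦ Finset.sum_congr rfl fun j _ ↦ ?_
    rw [hA.apply]
    ring
  rw [mul_sub, two_mul]
  nth_rewrite 1 [← hdiag]
  rw [← hdiag', Matrix.dot_mulVec_eq_sum_sum]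
  simp only [Finset.mul_sum, ← Finset.sum_add_distrib, ← Finset.sum_sub_distrib, Pi.mul_apply]
  refine Finset.sum_congr rfl fun i _ ↦ Finset.sum_congr rfl fun j _ ↦ ?_
  rw [hA.apply]
  ring

lemma eq_hub_of_sum_le (hA : A.IsSymm) (hA0 : ∀ i j, 0 ≤ A i j) (hw : ∀ i, 0 < w i) {o : ι}
    (ho : ∀ i, (A *ᵥ w) i ≠ 0 → A i o ≠ 0) {y : ι → ℝ}
    (hy : ∑ i, w i * (A *ᵥ w) i * y i ^ 2 ≤ (w * y) ⬝ᵥ A *ᵥ (w * y)) {i : ι}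
    (hi : (A *ᵥ w) i ≠ 0) : y i = y o := by
  have hterm (i j) : 0 ≤ A i j * w i * w j * (y i - y j) ^ 2 := by
    have := hA0 i j
    have := hw i
    have := hw j
    positivity
  have hsum : ∑ i, ∑ j, A i j * w i * w j * (y i - y j) ^ 2 = 0 := by
    refine le_antisymm ?_ (Finset.sum_nonneg fun i _ ↦ Finset.sum_nonneg fun j _ ↦ hterm i j)
    rw [sum_sum_mul_sub_sq hA]
    linarith
  rw [Fintype.sum_eq_zero_iff_of_nonneg fun i ↦ Finset.sum_nonneg fun j _ ↦ hterm i j] at hsum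
  have hrow := congrFun hsum i
  rw [Pi.zero_apply, Fintype.sum_eq_zero_iff_of_nonneg fun j ↦ hterm i j] at hrow
  have hentry : A i o * w i * w o * (y i - y o) ^ 2 = 0 := congrFun hrow o
  simpa [ho i hi, (hw i).ne', (hw o).ne', sub_eq_zero] using hentry

lemma apply_eq_zero_of_mulVec_eq_zero (hA0 : ∀ i j, 0 ≤ A i j) (hw : ∀ i, 0 < w i) {i : ι}
    (hi : (A *ᵥ w) i = 0) (j : ι) : A i j = 0 := by
  have hnonneg (j) : 0 ≤ A i j * w j := mul_nonneg (hA0 i j) (hw j).le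
  rw [Matrix.mulVec, dotProduct, Fintype.sum_eq_zero_iff_of_nonneg hnonneg] at hi
  simpa [(hw j).ne'] using congrFun hi j

lemma mulVec_nonneg_of_nonneg (hA0 : ∀ i j, 0 ≤ A i j) (hw : 0 ≤ w) : 0 ≤ A *ᵥ w :=
  fun i ↦ Finset.sum_nonneg fun j _ ↦ mul_nonneg (hA0 i j) (hw j)

lemma sum_le_of_bochner {y : ι → ℝ} {l : ℝ} (hl : 0 < l)
    (hy : A *ᵥ (w * y) = l • (A *ᵥ w * y))
    (h : (w * y) ⬝ᵥ A *ᵥ (w * y) ≤ ∑ i, w i * ((A *ᵥ (w * y)) i ^ 2 / (A *ᵥ w) i)) :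
    ∑ i, w i * (A *ᵥ w) i * y i ^ 2 ≤ (w * y) ⬝ᵥ A *ᵥ (w * y) := by
  set E := ∑ i, w i * (A *ᵥ w) i * y i ^ 2 with hE
  have hform : (w * y) ⬝ᵥ A *ᵥ (w * y) = l * E := by
    simp only [hy, hE, dotProduct, Finset.mul_sum, Pi.smul_apply, Pi.mul_apply, smul_eq_mul]
    exact Finset.sum_congr rfl fun i _ ↦ by ring
  have hsquare : ∑ i, w i * ((A *ᵥ (w * y)) i ^ 2 / (A *ᵥ w) i) = l * (l * E) := by
    simp only [hy, hE, Finset.mul_sum, Pi.smul_apply, Pi.mul_apply, smul_eq_mul]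
    refine Finset.sum_congr rfl fun i _ ↦ ?_
    rcases eq_or_ne ((A *ᵥ w) i) 0 with hi | hi
    · simp [hi]
    · field_simp
  rw [hform, hsquare] at h
  exact hform ▸ le_of_mul_le_mul_left h hl

-- For the pencil `A z = l ρ z` with `ρ = Aw / w`, the hypothesis `h` excludes `0 < l < 1`, and the
-- Dirichlet form of `A` leaves only multiples of `w` for `1 ≤ l`.
lemma isHyperbolicAt_of_bochner (hA : A.IsSymm) (hA0 : ∀ i j, 0 ≤ A i j) (hw : ∀ i, 0 < w i)
    {o : ι} (ho : ∀ i, (A *ᵥ w) i ≠ 0 → A i o ≠ 0)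
    (h : ∀ v, v ⬝ᵥ A *ᵥ v ≤ ∑ i, w i * ((A *ᵥ v) i ^ 2 / (A *ᵥ w) i)) :
    IsHyperbolicAt A w := by
  have hAw := mulVec_nonneg_of_nonneg hA0 fun i ↦ (hw i).le
  refine isHyperbolicAt_of_nonpos_of_dotProduct_eq_zero hA
    (dotProduct_nonneg_of_nonneg (fun i ↦ (hw i).le) hAw) (A *ᵥ w) fun v hv ↦ ?_
  set g : ι → ℝ := fun i ↦ √((A *ᵥ w) i / w i) with hg
  have hgw (i) : g i ^ 2 * w i = (A *ᵥ w) i := by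
    rw [hg, Real.sq_sqrt (div_nonneg (hAw i) (hw i).le), div_mul_cancel₀ _ (hw i).ne']
  refine dotProduct_mulVec_nonpos_of_generalized_eigenvectors hA (g := g) (p := w)
    (fun i j hi ↦ apply_eq_zero_of_mulVec_eq_zero hA0 hw (by simp [← hgw, hi]) j)
    (fun l hl z hz ↦ ?_) ?_
  · obtain ⟨y, rfl⟩ : ∃ y, z = w * y :=
      ⟨fun i ↦ z i / w i, funext fun i ↦ (mul_div_cancel₀ _ (hw i).ne').symm⟩
    have hy : A *ᵥ (w * y) = l • (A *ᵥ w * y) := by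
      rw [hz, ← mul_assoc]
      congr 2
      exact funext hgw
    refine ⟨y o, fun i hi ↦ ?_⟩
    have hi' : (A *ᵥ w) i ≠ 0 := by simp [← hgw, hi, (hw i).ne']
    rw [Pi.mul_apply, eq_hub_of_sum_le hA hA0 hw ho (sum_le_of_bochner hl hy (h _)) hi', mul_comm]
  · rw [← hv]
    congr 1
    exact funext hgw

theorem isHyperbolicAt_sum_smul {T : ι → Matrix ι ι ℝ} (hT : ∀ i, (T i).IsSymm)
    (hT' : ∀ i j k, T i j k = T j i k) (hT0 : ∀ i j k, 0 ≤ T i j k) (hw : ∀ i, 0 < w i)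
    {o : ι} (ho : ∀ i, ((∑ k, w k • T k) *ᵥ w) i ≠ 0 → (∑ k, w k • T k) i o ≠ 0)
    (hhyp : ∀ i, IsHyperbolicAt (T i) w) : IsHyperbolicAt (∑ k, w k • T k) w := by
  set A := ∑ k, w k • T k with hA
  have hAapply (i j) : A i j = ∑ k, w k * T k i j := by
    simp [hA, Matrix.sum_apply]
  have hAsymm : A.IsSymm := Matrix.IsSymm.ext fun i j ↦ by
    simp only [hAapply, fun k ↦ (hT k).apply]
  have hA0 (i j) : 0 ≤ A i j := by
    rw [hAapply]
    exact Finset.sum_nonneg fun k _ ↦ mul_nonneg (hw k).le (hT0 k i j)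
  have hcontract (i v) : w ⬝ᵥ T i *ᵥ v = (A *ᵥ v) i := by
    rw [Matrix.dot_mulVec_eq_sum_sum]
    simp only [Matrix.mulVec, dotProduct, hAapply, Finset.sum_mul, hT' i]
  refine isHyperbolicAt_of_bochner hAsymm hA0 hw ho fun v ↦ ?_
  have hTw (k) : 0 ≤ T k *ᵥ w := mulVec_nonneg_of_nonneg (hT0 k) fun i ↦ (hw i).le
  have hdecomp : v ⬝ᵥ A *ᵥ v = ∑ k, w k * (v ⬝ᵥ T k *ᵥ v) := by
    simp only [hA, Matrix.sum_mulVec, Matrix.smul_mulVec, dotProduct_sum, dotProduct_smul,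
      smul_eq_mul]
  rw [hdecomp]
  refine Finset.sum_le_sum fun k _ ↦ mul_le_mul_of_nonneg_left ?_ (hw k).le
  rw [← hcontract, ← hcontract]
  rcases (dotProduct_nonneg_of_nonneg (fun i ↦ (hw i).le) (hTw k)).eq_or_lt with hk | hk
  · have hTkw := hk.symm
    rw [dotProduct, Fintype.sum_eq_zero_iff_of_nonneg fun i ↦ mul_nonneg (hw i).le (hTw k i)]
      at hTkw
    have hTk (i j) : T k i j = 0 :=
      apply_eq_zero_of_mulVec_eq_zero (hT0 k) hw (by simpa [(hw i).ne'] using congrFun hTkw i) j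
    simp [← hk, Matrix.dot_mulVec_eq_sum_sum, hTk]
  · exact (le_div_iff₀ hk).2 (hhyp k v)

end Hyperbolic

section DirDeriv

variable {ι : Type*} [Fintype ι] {c : Multiset ι → ℝ} {w : ι → ℝ} {o : ι}

/-- Let `f` be a homogeneous polynomial whose coefficient at `x ^ s / s!` is `c s`, for every
multiset `s` of variables of size `deg f`. Then `dirDeriv c w n s` is the derivative of `f` once
along each variable in `s` and `n` times in the direction `w`, where `n + card s = deg f`; by
Euler's identity this is `n!` times the value at `w` of the derivative of `f` along `s`. -/
def dirDeriv (c : Multiset ι → ℝ) (w : ι → ℝ) : ℕ → Multiset ι → ℝ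
  | 0, s => c s
  | n + 1, s => ∑ x, w x * dirDeriv c w n (x ::ₘ s)

/-- The Hessian of the polynomial whose derivative is `dirDeriv c w n s`. -/
def dirHessian (c : Multiset ι → ℝ) (w : ι → ℝ) (n : ℕ) (s : Multiset ι) : Matrix ι ι ℝ :=
  Matrix.of fun x y ↦ dirDeriv c w n (x ::ₘ y ::ₘ s)

lemma dirDeriv_nonneg (hc : ∀ s, 0 ≤ c s) (hw : ∀ x, 0 ≤ w x) (n : ℕ) (s : Multiset ι) :
    0 ≤ dirDeriv c w n s := by
  induction n generalizing s with
  | zero => exact hc s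
  | succ n ih => exact Finset.sum_nonneg fun x _ ↦ mul_nonneg (hw x) (ih _)

lemma dirDeriv_cons_ne_zero (hc : ∀ s, 0 ≤ c s) (hw : ∀ x, 0 < w x)
    (ho : ∀ s x, c (x ::ₘ s) ≠ 0 → c (o ::ₘ s) ≠ 0) {n : ℕ} {s : Multiset ι}
    (h : dirDeriv c w (n + 1) s ≠ 0) : dirDeriv c w n (o ::ₘ s) ≠ 0 := by
  induction n generalizing s with
  | zero =>
    obtain ⟨x, -, hx⟩ := Finset.exists_ne_zero_of_sum_ne_zero h
    exact ho s x (right_ne_zero_of_mul hx)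
  | succ n ih =>
    obtain ⟨x, -, hx⟩ := Finset.exists_ne_zero_of_sum_ne_zero h
    have hox := ih (right_ne_zero_of_mul hx)
    rw [Multiset.cons_swap] at hox
    have hnonneg := dirDeriv_nonneg hc (fun x ↦ (hw x).le) n
    refine (Finset.sum_pos' (fun y _ ↦ mul_nonneg (hw y).le (hnonneg _))
      ⟨x, Finset.mem_univ x, ?_⟩).ne'
    exact mul_pos (hw x) ((hnonneg _).lt_of_ne' hox)

lemma continuous_dirDeriv (c : Multiset ι → ℝ) (n : ℕ) (s : Multiset ι) :
    Continuous fun w : ι → ℝ ↦ dirDeriv c w n s := by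
  induction n generalizing s with
  | zero => exact continuous_const
  | succ n ih => exact continuous_finsetSum _ fun x _ ↦ (continuous_apply x).mul (ih _)

lemma dirHessian_isSymm (c : Multiset ι → ℝ) (w : ι → ℝ) (n : ℕ) (s : Multiset ι) :
    (dirHessian c w n s).IsSymm :=
  Matrix.IsSymm.ext fun x y ↦ by rw [dirHessian, Matrix.of_apply, Multiset.cons_swap]; rfl

lemma dirHessian_mulVec (c : Multiset ι → ℝ) (w : ι → ℝ) (n : ℕ) (s : Multiset ι) (x : ι) :
    (dirHessian c w n s *ᵥ w) x = dirDeriv c w (n + 1) (x ::ₘ s) := by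
  simp only [dirDeriv, dirHessian, Matrix.mulVec, dotProduct, Matrix.of_apply]
  exact Finset.sum_congr rfl fun y _ ↦ by rw [mul_comm, Multiset.cons_swap]

lemma dotProduct_dirHessian_mulVec (c : Multiset ι → ℝ) (w : ι → ℝ) (n : ℕ) (s : Multiset ι) :
    w ⬝ᵥ dirHessian c w n s *ᵥ w = dirDeriv c w (n + 2) s := by
  rw [dirDeriv, dotProduct]
  simp only [dirHessian_mulVec]

lemma dirHessian_succ (c : Multiset ι → ℝ) (w : ι → ℝ) (n : ℕ) (s : Multiset ι) :
    dirHessian c w (n + 1) s = ∑ z, w z • dirHessian c w n (z ::ₘ s) := by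
  ext x y
  simp only [dirHessian, Matrix.of_apply, dirDeriv, Matrix.sum_apply, Matrix.smul_apply,
    smul_eq_mul]
  exact Finset.sum_congr rfl fun z _ ↦ by rw [Multiset.cons_swap z x, Multiset.cons_swap z y]

theorem isHyperbolicAt_dirHessian (hc : ∀ s, 0 ≤ c s) (hw : ∀ x, 0 < w x)
    (ho : ∀ s x, c (x ::ₘ s) ≠ 0 → c (o ::ₘ s) ≠ 0) {N : ℕ}
    (hbase : ∀ s, s.card = N → IsHyperbolicAt (dirHessian c w 0 s) w) (n : ℕ) (s : Multiset ι)
    (hs : s.card + n = N) : IsHyperbolicAt (dirHessian c w n s) w := by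
  induction n generalizing s with
  | zero => exact hbase s hs
  | succ n ih =>
    have ih' (z) : IsHyperbolicAt (dirHessian c w n (z ::ₘ s)) w :=
      ih _ (by rw [Multiset.card_cons]; lia)
    have hub (x) (hx : (dirHessian c w (n + 1) s *ᵥ w) x ≠ 0) :
        dirHessian c w (n + 1) s x o ≠ 0 := by
      rw [dirHessian_mulVec] at hx
      rw [dirHessian, Matrix.of_apply, Multiset.cons_swap]
      exact dirDeriv_cons_ne_zero hc hw ho hx
    rw [dirHessian_succ] at hub ⊢
    exact isHyperbolicAt_sum_smul (fun z ↦ dirHessian_isSymm _ _ _ _)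
      (fun z x y ↦ by
        simp only [dirHessian, Matrix.of_apply]
        rw [Multiset.cons_swap y z, Multiset.cons_swap x z, Multiset.cons_swap x y])
      (fun z x y ↦ dirDeriv_nonneg hc (fun x ↦ (hw x).le) _ _) hw hub ih'

theorem dirDeriv_mul_le_sq_of_pos (hc : ∀ s, 0 ≤ c s) (hw : ∀ x, 0 < w x)
    (ho : ∀ s x, c (x ::ₘ s) ≠ 0 → c (o ::ₘ s) ≠ 0) {n : ℕ}
    (hbase : ∀ s, s.card = n → IsHyperbolicAt (dirHessian c w 0 s) w) :
    dirDeriv c w n {o, o} * dirDeriv c w (n + 2) 0 ≤ dirDeriv c w (n + 1) {o} ^ 2 := by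
  have h := isHyperbolicAt_dirHessian hc hw ho hbase n 0 (by simp) (Pi.single o 1)
  rwa [dotProduct_dirHessian_mulVec, dotProduct_mulVec_comm_of_isSymm (dirHessian_isSymm _ _ _ _) w,
    single_one_dotProduct, single_one_dotProduct, Matrix.mulVec_single_one, dirHessian_mulVec] at h

theorem dirDeriv_mul_le_sq (hc : ∀ s, 0 ≤ c s) (hw : ∀ x, 0 ≤ w x)
    (ho : ∀ s x, c (x ::ₘ s) ≠ 0 → c (o ::ₘ s) ≠ 0) {n : ℕ}
    (hbase : ∀ w, (∀ x, 0 < w x) → ∀ s, s.card = n → IsHyperbolicAt (dirHessian c w 0 s) w) :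
    dirDeriv c w n {o, o} * dirDeriv c w (n + 2) 0 ≤ dirDeriv c w (n + 1) {o} ^ 2 := by
  set U : Set (ι → ℝ) := Set.univ.pi fun _ ↦ Set.Ioi 0 with hU
  have hwU : w ∈ closure U := by simpa [hU, closure_pi_set, Pi.le_def] using hw
  have hcont (n s) := (continuous_dirDeriv c n s).continuousOn (s := closure U)
  refine le_on_closure (fun u hu ↦ ?_) ((hcont n _).mul (hcont _ _)) ((hcont _ _).pow 2) hwU
  have hu0 (x) : 0 < u x := hu x (Set.mem_univ x)
  exact dirDeriv_mul_le_sq_of_pos hc hu0 ho (hbase u hu0)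

end DirDeriv

section Classes

variable {α κ : Type*}

lemma sum_sum_ne_mul (N : Finset α) (f : α → κ) (u : α → ℝ) :
    ∑ x ∈ N, ∑ y ∈ N, (if f x ≠ f y then u x * u y else 0) =
      (∑ x ∈ N, u x) ^ 2 - ∑ C ∈ N.image f, (∑ x ∈ N with f x = C, u x) ^ 2 := by
  have hclasses : ∑ C ∈ N.image f, (∑ x ∈ N with f x = C, u x) ^ 2 =
      ∑ x ∈ N, ∑ y ∈ N, (if f x = f y then u x * u y else 0) := by
    rw [← Finset.sum_fiberwise_of_maps_to fun x hx ↦ Finset.mem_image_of_mem f hx]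
    refine Finset.sum_congr rfl fun C _ ↦ ?_
    rw [sq, Finset.sum_mul_sum]
    refine Finset.sum_congr rfl fun x hx ↦ ?_
    simp only [Finset.sum_filter, (Finset.mem_filter.1 hx).2, eq_comm]
  rw [hclasses, sq, Finset.sum_mul_sum]
  simp only [← Finset.sum_sub_distrib]
  refine Finset.sum_congr rfl fun x _ ↦ Finset.sum_congr rfl fun y _ ↦ ?_
  by_cases h : f x = f y <;> simp [h]

lemma mul_sum_sum_ne_le (N : Finset α) (f : α → κ) (u : α → ℝ) {b d : ℝ} (hb : 0 ≤ b)
    (h : (b - d) * (N.image f).card ≤ b) :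
    b * ∑ x ∈ N, ∑ y ∈ N, (if f x ≠ f y then u x * u y else 0) ≤ d * (∑ x ∈ N, u x) ^ 2 := by
  set R := ∑ C ∈ N.image f, (∑ x ∈ N with f x = C, u x) ^ 2
  have hR0 : 0 ≤ R := Finset.sum_nonneg fun C _ ↦ sq_nonneg _
  have hCauchy : (∑ x ∈ N, u x) ^ 2 ≤ (N.image f).card * R := by
    rw [← Finset.sum_fiberwise_of_maps_to fun x hx ↦ Finset.mem_image_of_mem f hx]
    exact sq_sum_le_card_mul_sum_sq
  rw [sum_sum_ne_mul]
  rcases le_total b d with hbd | hbd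
  · nlinarith [sq_nonneg (∑ x ∈ N, u x)]
  · nlinarith [mul_le_mul_of_nonneg_left hCauchy (sub_nonneg.2 hbd)]

variable [Fintype α] {A : Matrix (Option α) (Option α) ℝ}

lemma isHyperbolicAt_single_none (hA : A.IsSymm)
    (h : ∀ u : α → ℝ, A none none * ∑ x, ∑ y, u x * A (some x) (some y) * u y ≤
      (∑ x, A none (some x) * u x) ^ 2) :
    IsHyperbolicAt A (Pi.single none 1) := by
  intro v
  set L := ∑ x, A none (some x) * v (some x) with hL
  set Q := ∑ x, ∑ y, v (some x) * A (some x) (some y) * v (some y) with hQ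
  have hrow : (A *ᵥ v) none = A none none * v none + L := by
    rw [Matrix.mulVec, dotProduct, Fintype.sum_option]
  have hrows (x) : (A *ᵥ v) (some x) =
      A none (some x) * v none + ∑ y, A (some x) (some y) * v (some y) := by
    rw [Matrix.mulVec, dotProduct, Fintype.sum_option, hA.apply]
  have hform : v ⬝ᵥ A *ᵥ v = v none ^ 2 * A none none + 2 * v none * L + Q := by
    have hcross : ∑ x, v (some x) * (A none (some x) * v none) = v none * L := by
      rw [hL, Finset.mul_sum]
      exact Finset.sum_congr rfl fun x _ ↦ by ring
    simp only [dotProduct, Fintype.sum_option, hrow, hrows, mul_add, Finset.sum_add_distrib,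
      hcross, hQ, Finset.mul_sum, mul_assoc]
    ring
  rw [Matrix.mulVec_single_one, single_one_dotProduct, single_one_dotProduct, hrow, hform,
    Matrix.col_apply]
  nlinarith [h fun x ↦ v (some x)]

theorem isHyperbolicAt_single_none_of_classes (hA : A.IsSymm) (N : Finset α) (f : α → κ)
    {c₀ c₁ c₂ : ℝ} (h₀ : A none none = c₀)
    (h₁ : ∀ x, A none (some x) = if x ∈ N then c₁ else 0)
    (h₂ : ∀ x y, A (some x) (some y) = if x ∈ N ∧ y ∈ N ∧ f x ≠ f y then c₂ else 0)
    (hc : 0 ≤ c₀ * c₂) (h : (c₀ * c₂ - c₁ ^ 2) * (N.image f).card ≤ c₀ * c₂) :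
    IsHyperbolicAt A (Pi.single none 1) := by
  refine isHyperbolicAt_single_none hA fun u ↦ ?_
  have hlin : ∑ x, A none (some x) * u x = c₁ * ∑ x ∈ N, u x := by
    simp [h₁, Finset.mul_sum, Finset.sum_ite_mem]
  have hquad : ∑ x, ∑ y, u x * A (some x) (some y) * u y =
      c₂ * ∑ x ∈ N, ∑ y ∈ N, (if f x ≠ f y then u x * u y else 0) := by
    rw [← Finset.sum_subset N.subset_univ fun x _ hx ↦ by simp [h₂, hx], Finset.mul_sum]
    refine Finset.sum_congr rfl fun x hx ↦ ?_
    rw [← Finset.sum_subset N.subset_univ fun y _ hy ↦ by simp [h₂, hy], Finset.mul_sum]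
    refine Finset.sum_congr rfl fun y hy ↦ ?_
    simp only [h₂, hx, hy, true_and]
    split_ifs <;> ring
  rw [h₀, hlin, hquad, ← mul_assoc, mul_pow]
  exact mul_sum_sum_ne_le N f u hc h

end Classes

lemma card_filterMap_le {α κ : Type*} (f : α → Option κ) (s : Multiset α) :
    (s.filterMap f).card ≤ s.card :=
  Quotient.inductionOn s fun _ ↦ List.length_filterMap_le _ _

section Matroid

variable {α : Type*} {M : Matroid α}

/-- A multiset is independent if it is the underlying multiset of an independent set. -/
def IsIndepMultiset (M : Matroid α) (S : Multiset α) : Prop :=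
  S.Nodup ∧ M.Indep {x | x ∈ S}

lemma isIndepMultiset_cons {S : Multiset α} {x : α} :
    IsIndepMultiset M (x ::ₘ S) ↔
      IsIndepMultiset M S ∧ x ∈ M.E \ M.closure {y | y ∈ S} := by
  have hset : {y | y ∈ x ::ₘ S} = insert x {y | y ∈ S} := by ext; simp
  rw [IsIndepMultiset, IsIndepMultiset, Multiset.nodup_cons, hset, Matroid.insert_indep_iff]
  constructor
  · rintro ⟨⟨hx, hnodup⟩, hind, hmem⟩
    exact ⟨⟨hnodup, hind⟩, hmem hx⟩
  · rintro ⟨⟨hnodup, hind⟩, hx⟩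
    exact ⟨⟨fun h ↦ hx.2 (M.mem_closure_of_mem' h hx.1), hnodup⟩, hind, fun _ ↦ hx⟩

lemma mem_closure_insert_iff_closure_insert_eq {S : Set α} {x y : α}
    (hx : x ∈ M.E \ M.closure S) :
    x ∈ M.closure (insert y S) ↔ M.closure (insert x S) = M.closure (insert y S) :=
  ⟨fun h ↦ Matroid.closure_insert_congr ⟨h, hx.2⟩,
    fun h ↦ h ▸ M.mem_closure_of_mem' (Set.mem_insert x S) hx.1⟩

lemma isIndepMultiset_cons_cons {S : Multiset α} {x y : α} :
    IsIndepMultiset M (x ::ₘ y ::ₘ S) ↔ IsIndepMultiset M S ∧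
      x ∈ M.E \ M.closure {z | z ∈ S} ∧ y ∈ M.E \ M.closure {z | z ∈ S} ∧
        M.closure (insert x {z | z ∈ S}) ≠ M.closure (insert y {z | z ∈ S}) := by
  have hset : {z | z ∈ y ::ₘ S} = insert y {z | z ∈ S} := by ext; simp
  rw [isIndepMultiset_cons, isIndepMultiset_cons, hset]
  constructor
  · rintro ⟨⟨hS, hy⟩, hxE, hx⟩
    have hxS : x ∈ M.E \ M.closure {z | z ∈ S} :=
      ⟨hxE, fun h ↦ hx (M.closure_subset_closure (Set.subset_insert _ _) h)⟩
    exact ⟨hS, hxS, hy, mt (mem_closure_insert_iff_closure_insert_eq hxS).2 hx⟩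
  · rintro ⟨hS, hx, hy, hne⟩
    exact ⟨⟨hS, hy⟩, hx.1, mt (mem_closure_insert_iff_closure_insert_eq hx).1 hne⟩

/-- The number of flats covering the flat spanned by `S`; the junk value `0` if there are infinitely
many. -/
def numCovers (M : Matroid α) (S : Set α) : ℕ :=
  ((fun x ↦ M.closure (insert x S)) '' (M.E \ M.closure S)).ncard

/-- The coefficient at `s` of the homogenised generating polynomial of the independent sets `T`
of `M`, each weighted by `a (card T)`. The variable `none` homogenises; `s` is indexed as in
`dirDeriv`. -/
def indepCoeff (M : Matroid α) (a : ℕ → ℝ) (s : Multiset (Option α)) : ℝ :=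
  if IsIndepMultiset M (s.filterMap id) then a (s.filterMap id).card else 0

lemma indepCoeff_nonneg {a : ℕ → ℝ} (ha : ∀ j, 0 ≤ a j) (s : Multiset (Option α)) :
    0 ≤ indepCoeff M a s := by
  rw [indepCoeff]
  split_ifs
  exacts [ha _, le_rfl]

lemma indepCoeff_cons_none (a : ℕ → ℝ) (s : Multiset (Option α)) :
    indepCoeff M a (none ::ₘ s) = indepCoeff M a s := by
  rw [indepCoeff, indepCoeff, Multiset.filterMap_cons_none _ _ rfl]

lemma indepCoeff_ne_zero_of_cons {a : ℕ → ℝ} (ha : ∀ j, a j ≠ 0) {s : Multiset (Option α)}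
    {x : Option α} (h : indepCoeff M a (x ::ₘ s) ≠ 0) : indepCoeff M a s ≠ 0 := by
  cases x with
  | none => rwa [indepCoeff_cons_none] at h
  | some x =>
    rw [indepCoeff, ite_ne_right_iff, Multiset.filterMap_cons_some id _ _ rfl,
      isIndepMultiset_cons] at h
    rw [indepCoeff, if_pos h.1.1]
    exact ha _

variable [Fintype α] {a : ℕ → ℝ}

/-- The number of independent sets of size `card S + n` containing `S`. -/
def numIndepOver (M : Matroid α) (S : Multiset α) (n : ℕ) : ℕ :=
  (Finset.univ.filter fun T : Finset α ↦
    M.Indep T ∧ S ≤ T.val ∧ T.card = S.card + n).card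

/-- The number of independent sets of size `k`. -/
def numIndep (M : Matroid α) (k : ℕ) : ℕ :=
  (Finset.univ.filter fun T : Finset α ↦ M.Indep T ∧ T.card = k).card

lemma numIndepOver_zero_left (k : ℕ) : numIndepOver M 0 k = numIndep M k := by
  simp [numIndepOver, numIndep]

lemma numIndepOver_zero_right (S : Multiset α) :
    numIndepOver M S 0 = if IsIndepMultiset M S then 1 else 0 := by
  have hiff (T : Finset α) : M.Indep T ∧ S ≤ T.val ∧ T.card = S.card + 0 ↔
      T.val = S ∧ IsIndepMultiset M S := by
    constructor
    · rintro ⟨hT, hle, hcard⟩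
      obtain rfl := Multiset.eq_of_le_of_card_le hle hcard.le
      exact ⟨rfl, T.nodup, hT⟩
    · rintro ⟨rfl, hT⟩
      exact ⟨hT.2, le_rfl, rfl⟩
  simp only [numIndepOver, hiff]
  split_ifs with hS
  · rw [Finset.card_eq_one]
    exact ⟨⟨S, hS.1⟩, by ext; simp [hS, ← Finset.val_inj]⟩
  · simp [hS]

lemma card_filter_cons_le {S : Multiset α} {T : Finset α} (h : S ≤ T.val) :
    (Finset.univ.filter fun x ↦ x ::ₘ S ≤ T.val).card = T.card - S.card := by
  have hfilter : (Finset.univ.filter fun x ↦ x ::ₘ S ≤ T.val) = (T.val - S).toFinset := by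
    ext x
    rw [Finset.mem_filter_univ, Multiset.mem_toFinset, ← Multiset.singleton_le,
      le_tsub_iff_right h, Multiset.singleton_add]
  rw [hfilter, Multiset.toFinset_card_of_nodup (Multiset.nodup_of_le tsub_le_self T.nodup),
    Multiset.card_sub h, Finset.card_val]

lemma sum_numIndepOver_cons (S : Multiset α) (n : ℕ) :
    ∑ x, numIndepOver M (x ::ₘ S) n = (n + 1) * numIndepOver M S (n + 1) := by
  have hiff (x) (T : Finset α) :
      M.Indep T ∧ x ::ₘ S ≤ T.val ∧ T.card = (x ::ₘ S).card + n ↔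
        (M.Indep T ∧ S ≤ T.val ∧ T.card = S.card + (n + 1)) ∧ x ::ₘ S ≤ T.val := by
    rw [Multiset.card_cons, add_assoc, add_comm 1 n]
    exact ⟨fun ⟨hT, hx, hcard⟩ ↦ ⟨⟨hT, (Multiset.le_cons_self S x).trans hx, hcard⟩, hx⟩,
      fun ⟨⟨hT, _, hcard⟩, hx⟩ ↦ ⟨hT, hx, hcard⟩⟩
  simp only [numIndepOver, hiff]
  set 𝒯 := Finset.univ.filter fun T : Finset α ↦
    M.Indep T ∧ S ≤ T.val ∧ T.card = S.card + (n + 1) with h𝒯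
  calc ∑ x, (Finset.univ.filter fun T : Finset α ↦ (M.Indep T ∧ S ≤ T.val ∧
            T.card = S.card + (n + 1)) ∧ x ::ₘ S ≤ T.val).card
      = ∑ x, (𝒯.filter fun T ↦ x ::ₘ S ≤ T.val).card := by simp only [h𝒯, Finset.filter_filter]
    _ = ∑ T ∈ 𝒯, (Finset.univ.filter fun x ↦ x ::ₘ S ≤ T.val).card :=
        Finset.sum_card_bipartiteAbove_eq_sum_card_bipartiteBelow _
    _ = ∑ T ∈ 𝒯, (n + 1) := Finset.sum_congr rfl fun T hT ↦ by
        obtain ⟨-, hle, hcard⟩ := (Finset.mem_filter_univ T).1 hT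
        rw [card_filter_cons_le hle, hcard, Nat.add_sub_cancel_left]
    _ = (n + 1) * 𝒯.card := by rw [Finset.sum_const, smul_eq_mul, mul_comm]

lemma dirDeriv_indepCoeff (a : ℕ → ℝ) (n : ℕ) (s : Multiset (Option α)) :
    dirDeriv (indepCoeff M a) (fun x ↦ x.elim 0 fun _ ↦ 1) n s =
      a ((s.filterMap id).card + n) * n.factorial * numIndepOver M (s.filterMap id) n := by
  induction n generalizing s with
  | zero =>
    rw [dirDeriv, indepCoeff, numIndepOver_zero_right]
    split_ifs <;> simp
  | succ n ih =>
    have hsome (x) : (some x ::ₘ s).filterMap id = x ::ₘ s.filterMap id := by simp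
    rw [dirDeriv, Fintype.sum_option]
    simp only [ih, Option.elim_none, Option.elim_some, zero_mul, zero_add, one_mul, hsome]
    simp only [Multiset.card_cons, ← Finset.mul_sum, ← Nat.cast_sum, sum_numIndepOver_cons,
      Nat.factorial_succ, add_assoc, add_comm 1 n]
    push_cast
    ring

lemma dirHessian_indepCoeff_eq_zero (ha : ∀ j, a j ≠ 0) {s : Multiset (Option α)}
    (hs : ¬ IsIndepMultiset M (s.filterMap id)) (w : Option α → ℝ) :
    dirHessian (indepCoeff M a) w 0 s = 0 := by
  ext x y
  by_contra hne
  exact indepCoeff_ne_zero_of_cons ha (indepCoeff_ne_zero_of_cons ha hne) (if_neg hs)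

lemma isHyperbolicAt_dirHessian_indepCoeff (ha : ∀ j, 0 < a j) {s : Multiset (Option α)}
    (h : IsIndepMultiset M (s.filterMap id) →
      (a (s.filterMap id).card * a ((s.filterMap id).card + 2) -
        a ((s.filterMap id).card + 1) ^ 2) * numCovers M {x | x ∈ s.filterMap id} ≤
      a (s.filterMap id).card * a ((s.filterMap id).card + 2))
    {w : Option α → ℝ} (hw : ∀ x, 0 ≤ w x) :
    IsHyperbolicAt (dirHessian (indepCoeff M a) w 0 s) w := by
  set S := s.filterMap id with hS
  by_cases hind : IsIndepMultiset M S
  swap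
  · simp [dirHessian_indepCoeff_eq_zero (fun j ↦ (ha j).ne') hind, IsHyperbolicAt]
  set A := dirHessian (indepCoeff M a) w 0 s with hA
  set N : Finset α := Finset.univ.filter fun x ↦ x ∈ M.E \ M.closure {y | y ∈ S} with hN
  have hsymm : A.IsSymm := dirHessian_isSymm _ _ _ _
  have hnonneg : 0 ≤ w ⬝ᵥ A *ᵥ w := by
    rw [hA, dotProduct_dirHessian_mulVec]
    exact dirDeriv_nonneg (indepCoeff_nonneg fun j ↦ (ha j).le) hw _ _
  have h₀ : A none none = a S.card := by
    simp [hA, dirHessian, dirDeriv, indepCoeff, ← hS, hind]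
  have h₁ (x) : A none (some x) = if x ∈ N then a (S.card + 1) else 0 := by
    simp [hA, hN, dirHessian, dirDeriv, indepCoeff, ← hS, hind, isIndepMultiset_cons]
  have h₂ (x y) : A (some x) (some y) = if x ∈ N ∧ y ∈ N ∧
      M.closure (insert x {z | z ∈ S}) ≠ M.closure (insert y {z | z ∈ S})
        then a (S.card + 2) else 0 := by
    simp [hA, hN, dirHessian, dirDeriv, indepCoeff, ← hS, hind, isIndepMultiset_cons_cons]
  have hcovers : (N.image fun x ↦ M.closure (insert x {z | z ∈ S})).card =
      numCovers M {x | x ∈ S} := by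
    rw [numCovers, ← Set.ncard_coe_finset, Finset.coe_image, hN, Finset.coe_filter_univ]
    rfl
  refine IsHyperbolicAt.of_pos hsymm (isHyperbolicAt_single_none_of_classes hsymm N _ h₀ h₁ h₂
    (mul_pos (ha _) (ha _)).le ?_) (by simp [h₀, ha]) hnonneg
  exact hcovers ▸ h hind

theorem factorial_mul_numIndep_mul_le (ha : ∀ j, 0 < a j) (n : ℕ)
    (h : ∀ S : Finset α, M.Indep S → S.card ≤ n →
      (a S.card * a (S.card + 2) - a (S.card + 1) ^ 2) * numCovers M S ≤
        a S.card * a (S.card + 2)) :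
    (a n * n.factorial * numIndep M n) * (a (n + 2) * (n + 2).factorial * numIndep M (n + 2)) ≤
      (a (n + 1) * (n + 1).factorial * numIndep M (n + 1)) ^ 2 := by
  have hbase (w : Option α → ℝ) (hw : ∀ x, 0 < w x) (s : Multiset (Option α)) (hs : s.card = n) :
      IsHyperbolicAt (dirHessian (indepCoeff M a) w 0 s) w :=
    isHyperbolicAt_dirHessian_indepCoeff ha (fun hind ↦ h ⟨_, hind.1⟩ hind.2 <|
      (card_filterMap_le id s).trans hs.le) fun x ↦ (hw x).le
  have hkey := dirDeriv_mul_le_sq (indepCoeff_nonneg fun j ↦ (ha j).le)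
    (w := fun x ↦ x.elim 0 fun _ ↦ 1) (fun x ↦ by cases x <;> simp)
    (fun s x hx ↦ indepCoeff_cons_none a s ▸ indepCoeff_ne_zero_of_cons (fun j ↦ (ha j).ne') hx)
    hbase
  have hnone : ({none} : Multiset (Option α)).filterMap id = 0 := rfl
  have hnone₂ : ({none, none} : Multiset (Option α)).filterMap id = 0 := rfl
  simpa only [dirDeriv_indepCoeff, hnone, hnone₂, Multiset.filterMap_zero, Multiset.card_zero,
    zero_add, numIndepOver_zero_left] using hkey

/-- The weights for which the condition of `factorial_mul_numIndep_mul_le` asks, at an independent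
set of size `n`, that at most `p` flats cover its span, and asks nothing below that size. -/
def stepWeight (n : ℕ) (p : ℝ) (j : ℕ) : ℝ :=
  if j ≤ n then p else p - 1

lemma stepWeight_of_le {n j : ℕ} (h : j ≤ n) (p : ℝ) : stepWeight n p j = p :=
  if_pos h

lemma stepWeight_of_lt {n j : ℕ} (h : n < j) (p : ℝ) : stepWeight n p j = p - 1 :=
  if_neg h.not_ge

lemma stepWeight_pos {p : ℝ} (hp : 1 < p) (n j : ℕ) : 0 < stepWeight n p j := by
  rw [stepWeight]
  split_ifs <;> linarith

lemma stepWeight_le (n : ℕ) (p : ℝ) (j : ℕ) : stepWeight n p j ≤ p := by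
  rw [stepWeight]
  split_ifs <;> linarith

lemma stepWeight_mul_sub_sq_mul_le {n j : ℕ} {p c : ℝ} (hp : 1 < p) (hj : j ≤ n) (hc : 0 ≤ c)
    (hcp : j = n → c ≤ p) :
    (stepWeight n p j * stepWeight n p (j + 2) - stepWeight n p (j + 1) ^ 2) * c ≤
      stepWeight n p j * stepWeight n p (j + 2) := by
  rw [stepWeight_of_le hj]
  rcases hj.eq_or_lt with rfl | hlt
  · rw [stepWeight_of_lt (by lia), stepWeight_of_lt (by lia)]
    nlinarith [hcp rfl]
  · rw [stepWeight_of_le hlt]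
    have hprod : 0 < p * stepWeight n p (j + 2) := mul_pos (by linarith) (stepWeight_pos hp _ _)
    have hdiff : p * stepWeight n p (j + 2) - p ^ 2 ≤ 0 := by
      nlinarith [stepWeight_le n p (j + 2)]
    exact (mul_nonpos_of_nonpos_of_nonneg hdiff hc).trans hprod.le

theorem numIndep_mul_le_sq_of_numCovers_le {n : ℕ} {p : ℝ} (hp : 1 < p)
    (hcovers : ∀ S : Finset α, M.Indep S → S.card = n → numCovers M S ≤ p) :
    (1 + 1 / (n + 1)) * (1 + 1 / (p - 1)) * numIndep M n * numIndep M (n + 2) ≤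
      (numIndep M (n + 1) : ℝ) ^ 2 := by
  have hp' : 0 < p - 1 := sub_pos.2 hp
  have hkey := factorial_mul_numIndep_mul_le (M := M) (stepWeight_pos hp n) n fun S hS hSn ↦
    stepWeight_mul_sub_sq_mul_le hp hSn (Nat.cast_nonneg _) (hcovers S hS)
  rw [stepWeight_of_le le_rfl, stepWeight_of_lt n.lt_succ_self, stepWeight_of_lt (by lia),
    Nat.factorial_succ (n + 1), Nat.factorial_succ n] at hkey
  set c : ℝ := (p - 1) ^ 2 * (n + 1) ^ 2 * n.factorial ^ 2 with hc
  refine le_of_mul_le_mul_left ?_ (by positivity : 0 < c)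
  calc c * ((1 + 1 / (n + 1)) * (1 + 1 / (p - 1)) * numIndep M n * numIndep M (n + 2))
      = p * n.factorial * numIndep M n *
          ((p - 1) * ((n + 1 + 1) * ((n + 1) * n.factorial)) * numIndep M (n + 2)) := by
        rw [hc]
        field_simp
        ring
    _ ≤ ((p - 1) * ((n + 1) * n.factorial) * numIndep M (n + 1)) ^ 2 := by exact_mod_cast hkey
    _ = c * numIndep M (n + 1) ^ 2 := by ring

end Matroid

section LinearMatroid

variable {F ι V : Type*} [Field F] [AddCommGroup V] [Module F V] {v : ι → V} {S : Set ι}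

lemma exists_mem_linearIndepOn_insert {T : Set ι} (hS : LinearIndepOn F v S)
    (hT : LinearIndepOn F v T) (h : S.encard < T.encard) :
    ∃ x ∈ T, x ∉ S ∧ LinearIndepOn F v (insert x S) := by
  obtain ⟨x, hxT, hx⟩ : ∃ x ∈ T, v x ∉ Submodule.span F (v '' S) := by
    by_contra! hspan
    have hle : Submodule.span F (v '' T) ≤ Submodule.span F (v '' S) :=
      Submodule.span_le.2 (Set.image_subset_iff.2 hspan)
    have hrank := OrderHomClass.mono Cardinal.toENat (Submodule.rank_mono hle)
    rw [toENat_rank_span_set hS, toENat_rank_span_set hT] at hrank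
    exact hrank.not_gt h
  exact ⟨x, hxT, fun hxS ↦ hx (Submodule.subset_span (Set.mem_image_of_mem v hxS)), hS.insert hx⟩

/-- The matroid on the index type of a family of vectors whose independent sets index the linearly
independent subfamilies; equal vectors with different indices are parallel elements. -/
def linearMatroid (F : Type*) [Field F] [Module F V] (v : ι → V) : Matroid ι :=
  (IndepMatroid.ofFinitaryCardAugment Set.univ (LinearIndepOn F v) (linearIndepOn_empty F v)
    (fun _ _ ↦ LinearIndepOn.mono)
    (fun I J hI hIfin hJ hJfin hlt ↦ exists_mem_linearIndepOn_insert hI hJ <| by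
      rwa [← hIfin.cast_ncard_eq, ← hJfin.cast_ncard_eq, Nat.cast_lt])
    (fun _ h ↦ linearIndepOn_of_finite _ h) fun _ _ ↦ Set.subset_univ _).matroid

lemma linearMatroid_indep_iff : (linearMatroid F v).Indep S ↔ LinearIndepOn F v S :=
  Iff.rfl

lemma closure_linearMatroid (hS : LinearIndepOn F v S) :
    (linearMatroid F v).closure S = v ⁻¹' Submodule.span F (v '' S) := by
  ext x
  rw [(linearMatroid_indep_iff.2 hS).mem_closure_iff', linearMatroid_indep_iff,
    linearIndepOn_insert_iff]
  simp only [Set.mem_preimage, SetLike.mem_coe, hS, true_and]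
  refine ⟨fun h ↦ ?_, fun h ↦ ⟨Set.mem_univ x, fun hx ↦ hx h⟩⟩
  by_contra hx
  exact hx (Submodule.subset_span (Set.mem_image_of_mem v (h.2 fun hmem ↦ absurd hmem hx)))

lemma finrank_span_image_eq_ncard (hS : LinearIndepOn F v S) :
    Module.finrank F (Submodule.span F (v '' S)) = S.ncard := by
  rw [Module.finrank, ← Cardinal.toNat_toENat, toENat_rank_span_set hS, Set.ncard]

lemma numCovers_linearMatroid_lt [Finite F] [Module.Finite F V] (hS : LinearIndepOn F v S) :
    numCovers (linearMatroid F v) S < Nat.card F ^ (Module.finrank F V - S.ncard) := by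
  set W := Submodule.span F (v '' S) with hW
  have : Finite (V ⧸ W) := Module.finite_of_finite F
  have hcard : Nat.card (V ⧸ W) = Nat.card F ^ (Module.finrank F V - S.ncard) := by
    rw [Module.natCard_eq_pow_finrank (K := F), Submodule.finrank_quotient,
      finrank_span_image_eq_ncard hS]
  have hcovers : (fun x ↦ (linearMatroid F v).closure (insert x S)) ''
        ((linearMatroid F v).E \ (linearMatroid F v).closure S) ⊆
      (fun z ↦ v ⁻¹' (Submodule.span F {z}).comap W.mkQ) '' {(0 : V ⧸ W)}ᶜ := by
    rintro _ ⟨x, ⟨-, hx⟩, rfl⟩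
    rw [closure_linearMatroid hS, Set.mem_preimage, SetLike.mem_coe] at hx
    refine ⟨W.mkQ (v x), mt (Submodule.Quotient.mk_eq_zero W).1 hx, ?_⟩
    simp only [closure_linearMatroid (hS.insert hx), Set.image_insert_eq, Submodule.span_insert,
      ← hW, ← Set.image_singleton, ← Submodule.map_span, Submodule.comap_map_mkQ, sup_comm]
  calc numCovers (linearMatroid F v) S
      ≤ ({(0 : V ⧸ W)}ᶜ : Set (V ⧸ W)).ncard :=
        (Set.ncard_le_ncard hcovers).trans Set.ncard_image_le
    _ < Nat.card (V ⧸ W) := by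
        rw [← Set.ncard_univ]
        exact Set.ncard_lt_ncard (Set.ssubset_univ_iff.2 (by simp))
    _ = Nat.card F ^ (Module.finrank F V - S.ncard) := hcard

lemma numIndep_linearMatroid_coe {m : ℕ} (X : Finset (Fin m → F)) (k : ℕ) :
    numIndep (linearMatroid F ((↑) : X → Fin m → F)) k = numLinIndepSets F X k := by
  have hindep (T : Finset X) : LinearIndepOn F ((↑) : X → Fin m → F) T ↔
      LinearIndepOn F id (T.map (Function.Embedding.subtype _) : Set (Fin m → F)) := by
    rw [Finset.coe_map, Function.Embedding.coe_subtype,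
      linearIndepOn_iff_image Subtype.val_injective.injOn]
  refine Finset.card_bij (fun T _ ↦ T.map (Function.Embedding.subtype _)) (fun T hT ↦ ?_)
    (fun T _ T' _ h ↦ Finset.map_injective _ h) fun S hS ↦ ?_
  · obtain ⟨hTindep, rfl⟩ := (Finset.mem_filter_univ T).1 hT
    exact Finset.mem_filter.2 ⟨Finset.mem_powerset.2 (Finset.map_subtype_subset T),
      Finset.card_map _, (hindep T).1 hTindep⟩
  · obtain ⟨hSX, rfl, hSindep⟩ := Finset.mem_filter.1 hS
    have hmap : (S.subtype (· ∈ X)).map (Function.Embedding.subtype _) = S :=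
      Finset.subtype_map_of_mem (Finset.mem_powerset.1 hSX)
    refine ⟨S.subtype (· ∈ X), (Finset.mem_filter_univ _).2 ⟨(hindep _).2 ?_, ?_⟩, hmap⟩
    · rwa [hmap]
    · rw [← Finset.card_map (Function.Embedding.subtype _), hmap]

end LinearMatroid

theorem finite_field_matroid_log_concavity_general {F V ι : Type*} [Field F] [Fintype F]
    [AddCommGroup V] [Module F V] [Fintype ι] (v : ι → V) {k : ℕ} (hk : 1 ≤ k)
    (hkV : k < Module.finrank F V) :
    ((1 : ℝ) + 1 / k) * (1 + 1 / ((Fintype.card F : ℝ) ^ (Module.finrank F V - k + 1) - 2)) *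
        numIndep (linearMatroid F v) (k - 1) * numIndep (linearMatroid F v) (k + 1) ≤
      (numIndep (linearMatroid F v) k : ℝ) ^ 2 := by
  obtain ⟨n, rfl⟩ : ∃ n, k = n + 1 := ⟨k - 1, by lia⟩
  have : Module.Finite F V := Module.finite_of_finrank_pos (by lia)
  set r := Module.finrank F V - (n + 1) + 1
  have hpow : 2 < Fintype.card F ^ r := calc
    2 < 2 ^ 2 := by norm_num
    _ ≤ 2 ^ r := Nat.pow_le_pow_right two_pos (by lia)
    _ ≤ Fintype.card F ^ r := Nat.pow_le_pow_left Fintype.one_lt_card r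
  have hp : 1 < (Fintype.card F : ℝ) ^ r - 1 := by
    rw [lt_sub_iff_add_lt, one_add_one_eq_two]
    exact_mod_cast hpow
  have hcovers (S : Finset ι) (hS : (linearMatroid F v).Indep S) (hn : S.card = n) :
      (numCovers (linearMatroid F v) S : ℝ) ≤ (Fintype.card F : ℝ) ^ r - 1 := by
    have hlt := numCovers_linearMatroid_lt (linearMatroid_indep_iff.1 hS)
    rw [Nat.card_eq_fintype_card, Set.ncard_coe_finset, hn,
      show Module.finrank F V - n = r by lia] at hlt
    rw [le_sub_iff_add_le]
    exact_mod_cast hlt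
  have hkey := numIndep_mul_le_sq_of_numCovers_le hp hcovers
  rw [sub_sub, one_add_one_eq_two] at hkey
  exact_mod_cast hkey

/-- **Refined log-concavity for matroids over finite fields.**  If `X ⊆ F_q^m` spans `F_q^m`,
then the numbers `I(k)` of linearly independent `k`-subsets of `X` satisfy
`I(k)² ≥ (1 + 1/k)·(1 + 1/(q^{m-k+1} - 2))·I(k-1)·I(k+1)` for all `1 ≤ k < m`. -/
theorem finite_field_matroid_log_concavity
    (q : ℕ) (F : Type*) [Field F] [Fintype F] (hq : Fintype.card F = q)
    (m : ℕ) (hm : 1 ≤ m)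
    (X : Finset (Fin m → F))
    (hspan : Submodule.span F (X : Set (Fin m → F)) = ⊤)
    (k : ℕ) (hk1 : 1 ≤ k) (hk2 : k < m) :
    ((1 : ℝ) + 1 / (k : ℝ)) * (1 + 1 / ((q : ℝ) ^ (m - k + 1) - 2)) *
        (numLinIndepSets F X (k - 1) : ℝ) * (numLinIndepSets F X (k + 1) : ℝ) ≤
      (numLinIndepSets F X k : ℝ) ^ 2 := by
  simpa only [numIndep_linearMatroid_coe, Module.finrank_fin_fun, hq] using
    finite_field_matroid_log_concavity_general ((↑) : X → Fin m → F) hk1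
      (hk2.trans_eq (Module.finrank_fin_fun F).symm)
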